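/- arXiv:2410.21957 — 3 statements merged into one kernel-verified Lean document; each statement's English description precedes it below -/
import Mathlib

section
/- Let n ≥ 1. Define 𝒯' : X → X by 𝒯'(θ, a, b) = (2b − θ, Σᵢ₌₁ⁿ bᵢ² − a, b), where (2b − θ)ᵢ = 2bᵢ − θᵢ. Then: (i) 𝒯' is well-defined, i.e. 𝒯'(Φ) satisfies the creative condition whenever Φ does; (ii) 𝒯'(𝒯'(Φ)) = Φ for every Φ ∈ X; (iii) the fixed point set of 𝒯' on X is exactly Y; and (iv) there exists Φ ∈ GX with 𝒯'(Φ) ∉ GX. Hence 𝒯' is a fake Legendre involution, distinct from the Legendre involution L. -/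
open scoped BigOperators

/-- Triples `(θ, a, b)` encoding maps `ℝⁿ → ℝ^{2n+1}`. -/
abbrev TripleMap (n : ℕ) :=
  ((Fin n → ℝ) → Fin n → ℝ) × ((Fin n → ℝ) → ℝ) × ((Fin n → ℝ) → Fin n → ℝ)

/-- All three components are `C^∞`. -/
def SmoothTriple (n : ℕ) (Φ : TripleMap n) : Prop :=
  ContDiff ℝ (⊤ : ℕ∞) Φ.1 ∧ ContDiff ℝ (⊤ : ℕ∞) Φ.2.1 ∧ ContDiff ℝ (⊤ : ℕ∞) Φ.2.2

/-- The creative condition (*): `da = ∑ᵢ bᵢ dθᵢ`. -/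
def Creative (n : ℕ) (Φ : TripleMap n) : Prop :=
  ∀ x v : Fin n → ℝ,
    fderiv ℝ Φ.2.1 x v = ∑ i, Φ.2.2 x i * fderiv ℝ (fun y => Φ.1 y i) x v

/-- `RegPts f` is the set of regular points of `f : ℝⁿ → ℝⁿ`, i.e. points where
the differential is invertible. -/
def RegPts (n : ℕ) (f : (Fin n → ℝ) → Fin n → ℝ) : Set (Fin n → ℝ) :=
  {x | Function.Bijective (fderiv ℝ f x)}

/-- `X`: smooth triples satisfying the creative condition. -/
def Xset (n : ℕ) : Set (TripleMap n) := {Φ | SmoothTriple n Φ ∧ Creative n Φ}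

/-- `GX`: elements of `X` such that `Reg θ` and `Reg b` are dense. -/
def GXset (n : ℕ) : Set (TripleMap n) :=
  {Φ | SmoothTriple n Φ ∧ Creative n Φ ∧ Dense (RegPts n Φ.1) ∧ Dense (RegPts n Φ.2.2)}

/-- `Y`: triples of the form `(θ, ½∑θᵢ², θ)` with `θ` smooth. -/
def Yset (n : ℕ) : Set (TripleMap n) :=
  {Φ | ∃ θ : (Fin n → ℝ) → Fin n → ℝ, ContDiff ℝ (⊤ : ℕ∞) θ ∧
    Φ = (θ, fun x => (1 / 2) * ∑ i, θ x i ^ 2, θ)}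

/-- `GY`: triples of the form `(θ, ½∑θᵢ², θ)` with `θ` smooth and `Reg θ` dense. -/
def GYset (n : ℕ) : Set (TripleMap n) :=
  {Φ | ∃ θ : (Fin n → ℝ) → Fin n → ℝ, ContDiff ℝ (⊤ : ℕ∞) θ ∧ Dense (RegPts n θ) ∧
    Φ = (θ, fun x => (1 / 2) * ∑ i, θ x i ^ 2, θ)}

/-- The Legendre involution `L(θ, a, b) = (b, ∑ᵢ bᵢθᵢ − a, θ)`. -/
def Legendre (n : ℕ) (Φ : TripleMap n) : TripleMap n :=
  (Φ.2.2, fun x => (∑ i, Φ.2.2 x i * Φ.1 x i) - Φ.2.1 x, Φ.1)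

/-- Packing a triple `(θ, a, b)` into a single map `ℝⁿ → ℝ^{2n+1}`
(realized as `ℝⁿ × ℝ × ℝⁿ`). -/
def packTriple (n : ℕ) (Φ : TripleMap n) : (Fin n → ℝ) → (Fin n → ℝ) × ℝ × (Fin n → ℝ) :=
  fun x => (Φ.1 x, Φ.2.1 x, Φ.2.2 x)

/-- The fake Legendre involution of CASE II-2: `𝒯'(θ, a, b) = (2b − θ, ∑ᵢbᵢ² − a, b)`. -/
def fakeT' (n : ℕ) (Φ : TripleMap n) : TripleMap n :=
  (fun x i => 2 * Φ.2.2 x i - Φ.1 x i, fun x => (∑ i, Φ.2.2 x i ^ 2) - Φ.2.1 x, Φ.2.2)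

/-!
Fix the third component `b`. The creative condition is then linear in `(θ, a)`, and one of its
solutions is the element `(b, ½|b|², b)` of `Y`. The map `𝒯'` is the point reflection of
`(θ, a, b)` through that solution. Therefore it preserves `X`, it is involutive, and a triple is
fixed exactly when it equals the centre of its reflection, that is, when it lies in `Y`.

The triple `(0, 0, x)` belongs to `X` but not to `GX`, while its reflection `(2x, |x|², x)` belongs
to `GX`. Reflecting back, `𝒯'` takes an element of `GX` out of `GX`. The Legendre involution swaps
`θ` and `b` and hence preserves `GX`, so the two involutions differ.
-/

section DotProduct

variable {ι E : Type*} [Fintype ι] [NormedAddCommGroup E] [NormedSpace ℝ E] {f g : E → ι → ℝ}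

theorem contDiff_dotProduct {k : WithTop ℕ∞} (hf : ContDiff ℝ k f) (hg : ContDiff ℝ k g) :
    ContDiff ℝ k fun x => f x ⬝ᵥ g x := by
  unfold dotProduct
  fun_prop

theorem hasFDerivAt_dotProduct {x : E} (hf : DifferentiableAt ℝ f x)
    (hg : DifferentiableAt ℝ g x) :
    HasFDerivAt (fun y => f y ⬝ᵥ g y)
      (∑ i, (f x i • (ContinuousLinearMap.proj i).comp (fderiv ℝ g x) +
        g x i • (ContinuousLinearMap.proj i).comp (fderiv ℝ f x))) x :=
  HasFDerivAt.fun_sum fun i _ =>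
    (hasFDerivAt_pi'.1 hf.hasFDerivAt i).mul (hasFDerivAt_pi'.1 hg.hasFDerivAt i)

theorem fderiv_dotProduct_apply {x : E} (hf : DifferentiableAt ℝ f x)
    (hg : DifferentiableAt ℝ g x) (v : E) :
    fderiv ℝ (fun y => f y ⬝ᵥ g y) x v = f x ⬝ᵥ fderiv ℝ g x v + g x ⬝ᵥ fderiv ℝ f x v := by
  rw [(hasFDerivAt_dotProduct hf hg).fderiv]
  simp [dotProduct, Finset.sum_add_distrib]

end DotProduct

section Triples

variable {n : ℕ} {θ θ' b : (Fin n → ℝ) → Fin n → ℝ} {a a' : (Fin n → ℝ) → ℝ} {Φ Ψ : TripleMap n}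

theorem creative_iff_fderiv_eq_dotProduct (hθ : Differentiable ℝ θ) :
    Creative n (θ, a, b) ↔ ∀ x v, fderiv ℝ a x v = b x ⬝ᵥ fderiv ℝ θ x v := by
  simp only [Creative, dotProduct, fderiv_apply (hθ _), ContinuousLinearMap.comp_apply,
    ContinuousLinearMap.proj_apply]

theorem creative_smul_add_smul (hθ : Differentiable ℝ θ) (ha : Differentiable ℝ a)
    (hθ' : Differentiable ℝ θ') (ha' : Differentiable ℝ a') (h : Creative n (θ, a, b))
    (h' : Creative n (θ', a', b)) (s t : ℝ) :
    Creative n (s • θ + t • θ', s • a + t • a', b) := by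
  rw [creative_iff_fderiv_eq_dotProduct hθ] at h
  rw [creative_iff_fderiv_eq_dotProduct hθ'] at h'
  rw [creative_iff_fderiv_eq_dotProduct ((hθ.const_smul s).add (hθ'.const_smul t))]
  intro x v
  rw [fderiv_add ((ha x).const_smul s) ((ha' x).const_smul t),
    fderiv_add ((hθ x).const_smul s) ((hθ' x).const_smul t),
    fderiv_const_smul_field, fderiv_const_smul_field,
    fderiv_const_smul_field, fderiv_const_smul_field]
  simp [h x v, h' x v]

theorem lineMap_mem_Xset (hΦ : Φ ∈ Xset n) (hΨ : Ψ ∈ Xset n) (hb : Φ.2.2 = Ψ.2.2) (t : ℝ) :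
    AffineMap.lineMap Φ Ψ t ∈ Xset n := by
  obtain ⟨θ, a, b⟩ := Φ
  obtain ⟨θ', a', b'⟩ := Ψ
  obtain rfl : b = b' := hb
  obtain ⟨⟨hθ, ha, hb⟩, hc⟩ := hΦ
  obtain ⟨⟨hθ', ha', -⟩, hc'⟩ := hΨ
  have lineMap_eq : AffineMap.lineMap (θ, a, b) (θ', a', b) t =
      ((1 - t) • θ + t • θ', (1 - t) • a + t • a', b) := by
    rw [AffineMap.lineMap_apply_module]
    simp [← add_smul]
  rw [lineMap_eq]
  exact ⟨⟨(hθ.const_smul (1 - t)).add (hθ'.const_smul t),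
      (ha.const_smul (1 - t)).add (ha'.const_smul t), hb⟩,
    creative_smul_add_smul (hθ.differentiable (by simp)) (ha.differentiable (by simp))
      (hθ'.differentiable (by simp)) (ha'.differentiable (by simp)) hc hc' _ _⟩

theorem pointReflection_mem_Xset (hΦ : Φ ∈ Xset n) (hΨ : Ψ ∈ Xset n) (hb : Φ.2.2 = Ψ.2.2) :
    AffineEquiv.pointReflection ℝ Φ Ψ ∈ Xset n := by
  rw [← AffineMap.homothety_neg_one_apply, AffineMap.homothety_eq_lineMap]
  exact lineMap_mem_Xset hΦ hΨ hb _

/-- The triple `(b, ½|b|², b)`. For smooth `b` these are the elements of `Y`, and `𝒯'` reflects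
`(θ, a, b)` through them. The square is written as a dot product to match the product rule. -/
noncomputable def selfDualTriple (b : (Fin n → ℝ) → Fin n → ℝ) : TripleMap n :=
  (b, fun x => (1 / 2) * (b x ⬝ᵥ b x), b)

theorem mem_Yset_iff (hb : ContDiff ℝ (⊤ : ℕ∞) Φ.2.2) :
    Φ ∈ Yset n ↔ selfDualTriple Φ.2.2 = Φ := by
  have selfDualTriple_eq (θ : (Fin n → ℝ) → Fin n → ℝ) :
      selfDualTriple θ = (θ, fun x => (1 / 2) * ∑ i, θ x i ^ 2, θ) := by
    simp only [selfDualTriple, dotProduct, pow_two]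
  constructor
  · rintro ⟨θ, -, rfl⟩
    exact selfDualTriple_eq θ
  · exact fun h => ⟨Φ.2.2, hb, h.symm.trans (selfDualTriple_eq Φ.2.2)⟩

theorem creative_selfDualTriple (hb : Differentiable ℝ b) : Creative n (selfDualTriple b) := by
  refine (creative_iff_fderiv_eq_dotProduct hb).2 fun x v => ?_
  calc
    fderiv ℝ (selfDualTriple b).2.1 x v = 1 / 2 * fderiv ℝ (fun y => b y ⬝ᵥ b y) x v := by
      rw [← smul_eq_mul, ← smul_apply,
        ← fderiv_const_mul (hasFDerivAt_dotProduct (hb x) (hb x)).differentiableAt]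
      rfl
    _ = b x ⬝ᵥ fderiv ℝ b x v := by
      rw [fderiv_dotProduct_apply (hb x) (hb x)]
      ring

theorem selfDualTriple_mem_Xset (hb : ContDiff ℝ (⊤ : ℕ∞) b) : selfDualTriple b ∈ Xset n :=
  ⟨⟨hb, contDiff_const.mul (contDiff_dotProduct hb hb), hb⟩,
    creative_selfDualTriple (hb.differentiable (by simp))⟩

theorem fakeT'_eq_pointReflection (Φ : TripleMap n) :
    fakeT' n Φ = AffineEquiv.pointReflection ℝ (selfDualTriple Φ.2.2) Φ := by
  rw [AffineEquiv.pointReflection_apply]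
  ext x i
  · change 2 * Φ.2.2 x i - Φ.1 x i = Φ.2.2 x i - Φ.1 x i + Φ.2.2 x i
    ring
  · change ∑ i, Φ.2.2 x i ^ 2 - Φ.2.1 x =
      1 / 2 * (Φ.2.2 x ⬝ᵥ Φ.2.2 x) - Φ.2.1 x + 1 / 2 * (Φ.2.2 x ⬝ᵥ Φ.2.2 x)
    simp only [dotProduct, pow_two]
    ring
  · exact (sub_add_cancel (Φ.2.2 x i) (Φ.2.2 x i)).symm

theorem fakeT'_mem_Xset (hΦ : Φ ∈ Xset n) : fakeT' n Φ ∈ Xset n := by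
  rw [fakeT'_eq_pointReflection]
  exact pointReflection_mem_Xset (selfDualTriple_mem_Xset hΦ.1.2.2) hΦ rfl

theorem fakeT'_involutive : Function.Involutive (fakeT' n) := by
  intro Φ
  have same_center : (fakeT' n Φ).2.2 = Φ.2.2 := rfl
  rw [fakeT'_eq_pointReflection (fakeT' n Φ), same_center, fakeT'_eq_pointReflection Φ]
  exact AffineEquiv.pointReflection_involutive ℝ _ Φ

theorem fakeT'_eq_self_iff (hb : ContDiff ℝ (⊤ : ℕ∞) Φ.2.2) : fakeT' n Φ = Φ ↔ Φ ∈ Yset n := by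
  rw [fakeT'_eq_pointReflection, AffineEquiv.pointReflection_fixed_iff_of_module, eq_comm,
    mem_Yset_iff hb]

theorem creative_legendre (hθ : Differentiable ℝ θ) (ha : Differentiable ℝ a)
    (hb : Differentiable ℝ b) (h : Creative n (θ, a, b)) :
    Creative n (Legendre n (θ, a, b)) := by
  refine (creative_iff_fderiv_eq_dotProduct hb).2 fun x v => ?_
  calc
    fderiv ℝ (Legendre n (θ, a, b)).2.1 x v =
        fderiv ℝ (fun y => b y ⬝ᵥ θ y) x v - fderiv ℝ a x v := by
      rw [← sub_apply,
        ← fderiv_fun_sub (hasFDerivAt_dotProduct (hb x) (hθ x)).differentiableAt (ha x)]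
      rfl
    _ = θ x ⬝ᵥ fderiv ℝ b x v := by
      rw [fderiv_dotProduct_apply (hb x) (hθ x), (creative_iff_fderiv_eq_dotProduct hθ).1 h]
      ring

theorem legendre_mem_Xset (hΦ : Φ ∈ Xset n) : Legendre n Φ ∈ Xset n := by
  obtain ⟨θ, a, b⟩ := Φ
  obtain ⟨⟨hθ, ha, hb⟩, hc⟩ := hΦ
  exact ⟨⟨hb, (contDiff_dotProduct hb hθ).sub ha, hθ⟩,
    creative_legendre (hθ.differentiable (by simp)) (ha.differentiable (by simp))
      (hb.differentiable (by simp)) hc⟩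

theorem legendre_mem_GXset (hΦ : Φ ∈ GXset n) : Legendre n Φ ∈ GXset n := by
  obtain ⟨hs, hc, hθ, hb⟩ := hΦ
  obtain ⟨hs', hc'⟩ := legendre_mem_Xset ⟨hs, hc⟩
  exact ⟨hs', hc', hb, hθ⟩

theorem regPts_const_smul {c : ℝ} (hc : c ≠ 0) (f : (Fin n → ℝ) → Fin n → ℝ) :
    RegPts n (c • f) = RegPts n f := by
  ext x
  simp only [RegPts, Set.mem_ofPred_eq, fderiv_const_smul_field]
  exact (MulAction.bijective₀ hc).of_comp_iff' _

theorem regPts_id : RegPts n id = Set.univ := by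
  simp [RegPts, Function.bijective_id]

theorem regPts_const [NeZero n] (c : Fin n → ℝ) : RegPts n (fun _ => c) = ∅ := by
  refine Set.eq_empty_of_forall_notMem fun x hx => ?_
  obtain ⟨v, hv⟩ := exists_ne (0 : Fin n → ℝ)
  exact hv (hx.injective (by simp))

/-- The Legendrian fibre `(0, 0, x)` of `(θ, a, b) ↦ (θ, a)` over the origin.
It lies in `X` but, for `n ≥ 1`, not in `GX`. -/
def fiberTriple (n : ℕ) : TripleMap n :=
  (0, 0, id)

theorem fiberTriple_mem_Xset : fiberTriple n ∈ Xset n :=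
  ⟨⟨contDiff_const, contDiff_const, contDiff_id⟩, fun x v => by simp [fiberTriple]⟩

theorem fiberTriple_notMem_GXset [NeZero n] : fiberTriple n ∉ GXset n := by
  rintro ⟨-, -, hθ, -⟩
  have regPts_empty : RegPts n (fiberTriple n).1 = ∅ := regPts_const 0
  simpa [regPts_empty] using hθ.nonempty

theorem fakeT'_fiberTriple_mem_GXset : fakeT' n (fiberTriple n) ∈ GXset n := by
  obtain ⟨smooth, creative⟩ := fakeT'_mem_Xset (fiberTriple_mem_Xset (n := n))
  have theta_eq : (fakeT' n (fiberTriple n)).1 = (2 : ℝ) • id := by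
    ext x i
    simp [fakeT', fiberTriple]
  have b_eq : (fakeT' n (fiberTriple n)).2.2 = id := rfl
  refine ⟨smooth, creative, ?_, ?_⟩
  · rw [theta_eq, regPts_const_smul two_ne_zero, regPts_id]
    exact dense_univ
  · rw [b_eq, regPts_id]
    exact dense_univ

theorem exists_mem_GXset_fakeT'_notMem_GXset [NeZero n] : ∃ Φ ∈ GXset n, fakeT' n Φ ∉ GXset n :=
  ⟨fakeT' n (fiberTriple n), fakeT'_fiberTriple_mem_GXset, by
    rw [fakeT'_involutive]
    exact fiberTriple_notMem_GXset⟩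

end Triples

/-- `𝒯'(θ, a, b) = (2b − θ, ∑ᵢbᵢ² − a, b)` is a fake Legendre involution: it maps `X`
to `X`, is an involution of `X`, its fixed point set on `X` is exactly `Y`, but it does
not map `GX` into `GX`; in particular it is distinct from the Legendre involution. -/
theorem fakeT'_is_fake_legendre_involution (n : ℕ) (hn : 1 ≤ n) :
    (∀ Φ ∈ Xset n, fakeT' n Φ ∈ Xset n) ∧
    (∀ Φ ∈ Xset n, fakeT' n (fakeT' n Φ) = Φ) ∧
    (∀ Φ ∈ Xset n, (fakeT' n Φ = Φ ↔ Φ ∈ Yset n)) ∧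
    (∃ Φ ∈ GXset n, fakeT' n Φ ∉ GXset n) ∧
    (∃ Φ ∈ GXset n, fakeT' n Φ ≠ Legendre n Φ) := by
  have : NeZero n := ⟨Nat.one_le_iff_ne_zero.1 hn⟩
  obtain ⟨Φ, hΦ, hTΦ⟩ := exists_mem_GXset_fakeT'_notMem_GXset (n := n)
  have fakeT'_ne_legendre : fakeT' n Φ ≠ Legendre n Φ := fun h =>
    hTΦ (h ▸ legendre_mem_GXset hΦ)
  exact ⟨fun _ => fakeT'_mem_Xset, fun Φ _ => fakeT'_involutive Φ,
    fun _ hΦ => fakeT'_eq_self_iff hΦ.1.2.2, ⟨Φ, hΦ, hTΦ⟩, ⟨Φ, hΦ, fakeT'_ne_legendre⟩⟩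
end

section
/- The smooth map φ : ℝ → ℝ², φ(x) = (x², x⁵), is a frontal but not a wavefront: there exists a smooth map ν : ℝ → S¹ with ⟨φ'(x), ν(x)⟩ = 0 for all x ∈ ℝ (for instance ν(x) = (−5x³, 2)/√(25x⁶ + 4)), but for every smooth map ν : ℝ → S¹ satisfying ⟨φ'(x), ν(x)⟩ = 0 for all x ∈ ℝ, the map (φ, ν) : ℝ → ℝ² × S¹ fails to be an immersion (its derivative vanishes at x = 0). -/
/-!
If `φ' = f • w` with `w` nowhere zero and `f` nonzero on a dense set, then a continuous field is
normal to `φ` exactly when it is normal to `w`. The continuous unit normals are therefore the two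
fields `±w^⊥ / |w|`. They are as smooth as `w`, and stationary wherever `w` is; at such a point
where moreover `f` vanishes, the derivative of `(φ, ν)` is zero.
For `φ(x) = (x^m, x^n)` one takes `f(x) = x^(m-1)` and `w(x) = (m, n x^(n-m))`, and `w'(0) = 0` as
soon as `n ≥ m + 2`.
-/

/-- The vector `w` rotated by a right angle counterclockwise and scaled to Euclidean length one.
It selects one of the two unit normals of the line spanned by `w`; the value at `w = 0` is `0`. -/
noncomputable def unitNormal (w : ℝ × ℝ) : ℝ × ℝ :=
  (-w.2 / √(w.1 ^ 2 + w.2 ^ 2), w.1 / √(w.1 ^ 2 + w.2 ^ 2))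

/-- `ν` is a field of Euclidean unit vectors orthogonal to the vector field `w`. For `w = deriv φ`
this says that `ν` is a Gauss mapping of `φ`, except that no regularity of `ν` is included.
Scalar products are written in coordinates since the norm of `ℝ × ℝ` is not Euclidean. -/
def IsUnitNormalField {X : Type*} (w ν : X → ℝ × ℝ) : Prop :=
  (∀ x, (ν x).1 ^ 2 + (ν x).2 ^ 2 = 1) ∧ ∀ x, (w x).1 * (ν x).1 + (w x).2 * (ν x).2 = 0

theorem fst_sq_add_snd_sq_pos {w : ℝ × ℝ} (hw : w ≠ 0) : 0 < w.1 ^ 2 + w.2 ^ 2 := by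
  by_cases h : w.1 = 0
  · have : w.2 ≠ 0 := fun h' => hw (Prod.ext h h')
    positivity
  · positivity

theorem unitNormal_fst_sq_add_snd_sq {w : ℝ × ℝ} (hw : w ≠ 0) :
    (unitNormal w).1 ^ 2 + (unitNormal w).2 ^ 2 = 1 := by
  have hpos := fst_sq_add_snd_sq_pos hw
  simp only [unitNormal, div_pow, Real.sq_sqrt hpos.le]
  rw [← add_div, neg_sq, add_comm, div_self hpos.ne']

theorem fst_mul_unitNormal_fst_add_snd_mul_unitNormal_snd (w : ℝ × ℝ) :
    w.1 * (unitNormal w).1 + w.2 * (unitNormal w).2 = 0 := by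
  simp only [unitNormal]
  ring

theorem eq_smul_unitNormal {w v : ℝ × ℝ} (hw : w ≠ 0) (h : w.1 * v.1 + w.2 * v.2 = 0) :
    v = ((unitNormal w).1 * v.1 + (unitNormal w).2 * v.2) • unitNormal w := by
  have hpos := fst_sq_add_snd_sq_pos hw
  have hsqrt : √(w.1 ^ 2 + w.2 ^ 2) ^ 2 = w.1 ^ 2 + w.2 ^ 2 := Real.sq_sqrt hpos.le
  have hne : √(w.1 ^ 2 + w.2 ^ 2) ≠ 0 := (Real.sqrt_pos.2 hpos).ne'
  ext
  · simp only [unitNormal, Prod.smul_fst, smul_eq_mul]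
    field_simp
    linear_combination v.1 * hsqrt + w.1 * h
  · simp only [unitNormal, Prod.smul_snd, smul_eq_mul]
    field_simp
    linear_combination v.2 * hsqrt + w.2 * h

theorem contDiffAt_unitNormal {n : WithTop ℕ∞} {w : ℝ × ℝ} (hw : w ≠ 0) :
    ContDiffAt ℝ n unitNormal w := by
  have hpos := fst_sq_add_snd_sq_pos hw
  have hsqrt : ContDiffAt ℝ n (fun v : ℝ × ℝ => √(v.1 ^ 2 + v.2 ^ 2)) w :=
    ContDiffAt.sqrt (by fun_prop) hpos.ne'
  have hne : √(w.1 ^ 2 + w.2 ^ 2) ≠ 0 := (Real.sqrt_pos.2 hpos).ne'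
  exact (contDiffAt_snd.neg.div hsqrt hne).prodMk (contDiffAt_fst.div hsqrt hne)

theorem isUnitNormalField_unitNormal {X : Type*} {w : X → ℝ × ℝ} (hw : ∀ x, w x ≠ 0) :
    IsUnitNormalField w fun x => unitNormal (w x) :=
  ⟨fun x => unitNormal_fst_sq_add_snd_sq (hw x),
    fun x => fst_mul_unitNormal_fst_add_snd_mul_unitNormal_snd (w x)⟩

namespace IsUnitNormalField

theorem smul {X : Type*} {w ν : X → ℝ × ℝ} (h : IsUnitNormalField w ν) (f : X → ℝ) :
    IsUnitNormalField (fun x => f x • w x) ν := by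
  refine ⟨h.1, fun x => ?_⟩
  simp only [Prod.smul_fst, Prod.smul_snd, smul_eq_mul]
  linear_combination f x * h.2 x

variable {X : Type*} [TopologicalSpace X] {w ν : X → ℝ × ℝ}

theorem of_smul {f : X → ℝ} (h : IsUnitNormalField (fun x => f x • w x) ν)
    (hf : Dense {x | f x ≠ 0}) (hw : Continuous w) (hν : Continuous ν) :
    IsUnitNormalField w ν := by
  have hdot : (fun x => (w x).1 * (ν x).1 + (w x).2 * (ν x).2) = fun _ => 0 := by
    refine Continuous.ext_on hf (by fun_prop) continuous_const fun x hx => ?_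
    have hx0 := h.2 x
    simp only [Prod.smul_fst, Prod.smul_snd, smul_eq_mul] at hx0
    refine mul_left_cancel₀ (show f x ≠ 0 from hx) ?_
    linear_combination hx0
  exact ⟨h.1, congrFun hdot⟩

theorem eq_unitNormal_or_eq_neg [PreconnectedSpace X] (h : IsUnitNormalField w ν)
    (hw : Continuous w) (hne : ∀ x, w x ≠ 0) (hν : Continuous ν) :
    (ν = fun x => unitNormal (w x)) ∨ ν = fun x => -unitNormal (w x) := by
  have hN : Continuous fun x => unitNormal (w x) := continuous_iff_continuousAt.2 fun x =>
    (contDiffAt_unitNormal (n := 0) (hne x)).continuousAt.comp hw.continuousAt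
  set s : X → ℝ := fun x => (unitNormal (w x)).1 * (ν x).1 + (unitNormal (w x)).2 * (ν x).2
  have hs : Continuous s := (hN.fst.mul hν.fst).add (hN.snd.mul hν.snd)
  have hν_eq : ∀ x, ν x = s x • unitNormal (w x) := fun x => eq_smul_unitNormal (hne x) (h.2 x)
  have hs_sq : ∀ x, s x ^ 2 = 1 := fun x => by
    have hx := h.1 x
    simp only [hν_eq x, Prod.smul_fst, Prod.smul_snd, smul_eq_mul] at hx
    linear_combination hx - s x ^ 2 * unitNormal_fst_sq_add_snd_sq (hne x)
  rcases isPreconnected_univ.eq_one_or_eq_neg_one_of_sq_eq hs.continuousOn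
    (fun x _ => hs_sq x) with hs_one | hs_neg
  · left
    funext x
    rw [hν_eq, hs_one (Set.mem_univ x), Pi.one_apply, one_smul]
  · right
    funext x
    rw [hν_eq, hs_neg (Set.mem_univ x), Pi.neg_apply, Pi.one_apply, neg_one_smul]

end IsUnitNormalField

section Curve

variable {φ w ν : ℝ → ℝ × ℝ} {f : ℝ → ℝ} {x₀ : ℝ}

theorem IsUnitNormalField.hasDerivAt_zero (h : IsUnitNormalField w ν) (hw : Continuous w)
    (hne : ∀ x, w x ≠ 0) (hν : Continuous ν) (hw₀ : HasDerivAt w 0 x₀) : HasDerivAt ν 0 x₀ := by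
  have hN : HasDerivAt (fun x => unitNormal (w x)) 0 x₀ := by
    have hdiff : DifferentiableAt ℝ unitNormal (w x₀) :=
      (contDiffAt_unitNormal (n := 1) (hne x₀)).differentiableAt one_ne_zero
    exact (hdiff.hasFDerivAt.comp_hasDerivAt x₀ hw₀).congr_deriv (map_zero _)
  rcases h.eq_unitNormal_or_eq_neg hw hne hν with rfl | rfl
  · exact hN
  · simpa only [neg_zero] using hN.fun_neg

theorem exists_contDiff_isUnitNormalField_deriv {n : WithTop ℕ∞}
    (hφ : ∀ x, HasDerivAt φ (f x • w x) x) (hw : ContDiff ℝ n w) (hne : ∀ x, w x ≠ 0) :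
    ∃ ν : ℝ → ℝ × ℝ, ContDiff ℝ n ν ∧ IsUnitNormalField (deriv φ) ν := by
  refine ⟨fun x => unitNormal (w x), contDiff_iff_contDiffAt.2 fun x =>
    (contDiffAt_unitNormal (hne x)).comp x hw.contDiffAt, ?_⟩
  rw [deriv_eq hφ]
  exact (isUnitNormalField_unitNormal hne).smul f

theorem IsUnitNormalField.hasDerivAt_prodMk_zero (h : IsUnitNormalField (deriv φ) ν)
    (hφ : ∀ x, HasDerivAt φ (f x • w x) x) (hf : Dense {x | f x ≠ 0}) (hw : Continuous w)
    (hne : ∀ x, w x ≠ 0) (hν : Continuous ν) (hf₀ : f x₀ = 0) (hw₀ : HasDerivAt w 0 x₀) :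
    HasDerivAt (fun x => (φ x, ν x)) 0 x₀ := by
  rw [deriv_eq hφ] at h
  have hν₀ : HasDerivAt ν 0 x₀ := (h.of_smul hf hw hν).hasDerivAt_zero hw hne hν hw₀
  have hφ₀ : HasDerivAt φ 0 x₀ := by simpa only [hf₀, zero_smul] using hφ x₀
  exact hφ₀.prodMk hν₀

end Curve

theorem hasDerivAt_pow_prodMk_pow {m n : ℕ} (hm : 1 ≤ m) (hmn : m ≤ n) (x : ℝ) :
    HasDerivAt (fun y : ℝ => (y ^ m, y ^ n)) (x ^ (m - 1) • ((m : ℝ), n * x ^ (n - m))) x := by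
  refine ((hasDerivAt_pow m x).prodMk (hasDerivAt_pow n x)).congr_deriv ?_
  have hpow : x ^ (n - 1) = x ^ (m - 1) * x ^ (n - m) := by
    rw [← pow_add]
    congr 1
    lia
  ext
  · simp only [Prod.smul_fst, smul_eq_mul, mul_comm]
  · simp only [Prod.smul_snd, smul_eq_mul, hpow, mul_left_comm]

theorem hasDerivAt_const_prodMk_mul_pow_zero {k : ℕ} (hk : 2 ≤ k) (a b : ℝ) :
    HasDerivAt (fun x : ℝ => (a, b * x ^ k)) 0 0 := by
  refine ((hasDerivAt_const 0 a).prodMk ((hasDerivAt_pow k 0).const_mul b)).congr_deriv ?_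
  rw [zero_pow (by lia : k - 1 ≠ 0), mul_zero, mul_zero, Prod.mk_zero_zero]

theorem x2_x5_is_frontal_but_not_wavefront_general {m n : ℕ} (hm : 2 ≤ m) (hmn : m + 2 ≤ n) :
    (∃ ν : ℝ → ℝ × ℝ, ContDiff ℝ (⊤ : ℕ∞) ν ∧
      IsUnitNormalField (deriv fun y : ℝ => (y ^ m, y ^ n)) ν) ∧
    ∀ ν : ℝ → ℝ × ℝ, Continuous ν → IsUnitNormalField (deriv fun y : ℝ => (y ^ m, y ^ n)) ν →
      HasDerivAt (fun x : ℝ => ((x ^ m, x ^ n), ν x)) 0 0 := by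
  have hφ := hasDerivAt_pow_prodMk_pow (by lia : 1 ≤ m) (by lia : m ≤ n)
  have hw : ContDiff ℝ (⊤ : ℕ∞) fun x : ℝ => ((m : ℝ), n * x ^ (n - m)) := by fun_prop
  have hne : ∀ x : ℝ, ((m : ℝ), n * x ^ (n - m)) ≠ 0 := fun x h =>
    (by lia : m ≠ 0) (Nat.cast_eq_zero.1 (congrArg Prod.fst h))
  have hf : Dense {x : ℝ | x ^ (m - 1) ≠ 0} :=
    (dense_compl_singleton (0 : ℝ)).mono fun x hx => pow_ne_zero _ hx
  exact ⟨exists_contDiff_isUnitNormalField_deriv hφ hw hne, fun ν hν h =>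
    h.hasDerivAt_prodMk_zero hφ hf hw.continuous hne hν (zero_pow (by lia))
      (hasDerivAt_const_prodMk_mul_pow_zero (by lia) _ _)⟩

/-- The map `φ(x) = (x², x⁵)` is a frontal but not a wavefront: there is a smooth unit
normal `ν : ℝ → S¹` with `⟨φ'(x), ν(x)⟩ = 0` for all `x`, but for every such `ν` the
Legendre mapping `(φ, ν)` fails to be an immersion, its derivative vanishing at `x = 0`. -/
theorem x2_x5_is_frontal_but_not_wavefront :
    (∃ ν : ℝ → ℝ × ℝ, ContDiff ℝ (⊤ : ℕ∞) ν ∧ (∀ x, (ν x).1 ^ 2 + (ν x).2 ^ 2 = 1) ∧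
      (∀ x, (deriv (fun y : ℝ => ((y ^ 2, y ^ 5) : ℝ × ℝ)) x).1 * (ν x).1
        + (deriv (fun y : ℝ => ((y ^ 2, y ^ 5) : ℝ × ℝ)) x).2 * (ν x).2 = 0)) ∧
    (∀ ν : ℝ → ℝ × ℝ, ContDiff ℝ (⊤ : ℕ∞) ν → (∀ x, (ν x).1 ^ 2 + (ν x).2 ^ 2 = 1) →
      (∀ x, (deriv (fun y : ℝ => ((y ^ 2, y ^ 5) : ℝ × ℝ)) x).1 * (ν x).1
        + (deriv (fun y : ℝ => ((y ^ 2, y ^ 5) : ℝ × ℝ)) x).2 * (ν x).2 = 0) →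
      deriv (fun x : ℝ => (((x ^ 2, x ^ 5) : ℝ × ℝ), ν x)) 0 = 0) := by
  obtain ⟨hfrontal, hsingular⟩ :=
    x2_x5_is_frontal_but_not_wavefront_general (m := 2) (n := 5) (by norm_num) (by norm_num)
  exact ⟨hfrontal, fun ν hν hunit horth => (hsingular ν hν.continuous ⟨hunit, horth⟩).deriv⟩
end

section
/- Let ν : ℝ → S¹ be ν(x) = (−5x³, 2)/√(25x⁶ + 4) and a : ℝ → ℝ be a(x) = −3x⁵/√(25x⁶ + 4). Let θ : ℝ → ℝ be any smooth function with (cos θ(x), sin θ(x)) = ν(x). Then θ'(x) = 30x²/(25x⁶ + 4) and a'(x) = (−150x¹⁰ − 60x⁴)/(25x⁶ + 4)^{3/2}; in particular a' is divisible by θ' in the sense that there is a smooth function b : ℝ → ℝ with a'(x) = b(x)·θ'(x) for all x ∈ ℝ, so the line family {H_{(ν(x), a(x))}}_{x ∈ ℝ} is creative. -/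
open Real

/-!
The lines are the tangent lines of the frontal `φ(x) = (x², x⁵)`, so `⟨φ', ν⟩ = 0` and
`a = ⟨φ, ν⟩`. Hence `a' = ⟨φ, ν'⟩`, and `ν' = θ' • (-sin θ, cos θ)` gives `a' = b * θ'` with
`b = ⟨φ, (-sin θ, cos θ)⟩ = (-5x⁸ - 2x²)/√(25x⁶ + 4)`. The derivative of `θ` is read off the curve
`(-5x³, 2)`, whose polar coordinates are `√(25x⁶ + 4)` and `θ`. A continuous angle function
inherits differentiability from its cosine and sine, because `θ y = θ x + arcsin (sin (θ y - θ x))`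
for `y` near `x`.
-/

open scoped Topology

section AngleFunction

variable {θ : ℝ → ℝ} {x : ℝ}

theorem hasDerivAt_angle_of_cos_sin {c' s' : ℝ} (hθ : ContinuousAt θ x)
    (hc : HasDerivAt (fun y => cos (θ y)) c' x) (hs : HasDerivAt (fun y => sin (θ y)) s' x) :
    HasDerivAt θ (cos (θ x) * s' - sin (θ x) * c') x := by
  have hsub : HasDerivAt (fun y => sin (θ y - θ x)) (s' * cos (θ x) - c' * sin (θ x)) x := by
    simp only [sin_sub]
    exact (hs.mul_const _).sub (hc.mul_const _)
  have harcsin : HasDerivAt arcsin 1 (sin (θ x - θ x)) := by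
    simpa using hasDerivAt_arcsin (x := 0) (by norm_num) (by norm_num)
  have hlocal : θ =ᶠ[𝓝 x] fun y => arcsin (sin (θ y - θ x)) + θ x := by
    have hnear : ∀ᶠ y in 𝓝 x, θ y - θ x ∈ Set.Ioo (-(π / 2)) (π / 2) :=
      (hθ.sub continuousAt_const).eventually_mem <|
        Ioo_mem_nhds (by simp [pi_pos]) (by simp [pi_pos])
    filter_upwards [hnear] with y hy
    rw [arcsin_sin hy.1.le hy.2.le, sub_add_cancel]
  exact (((harcsin.comp x hsub).add_const (θ x)).congr_of_eventuallyEq hlocal).congr_deriv (by ring)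

theorem hasDerivAt_angle_of_polar {r : ℝ → ℝ} {p' q' : ℝ} (hθ : ContinuousAt θ x)
    (hr : DifferentiableAt ℝ r x) (hr₀ : r x ≠ 0)
    (hp : HasDerivAt (fun y => r y * cos (θ y)) p' x)
    (hq : HasDerivAt (fun y => r y * sin (θ y)) q' x) :
    HasDerivAt θ ((r x * cos (θ x) * q' - r x * sin (θ x) * p') / r x ^ 2) x := by
  have hr_ne : ∀ᶠ y in 𝓝 x, r y ≠ 0 := hr.continuousAt.eventually_ne hr₀
  have hc := (hp.div hr.hasDerivAt hr₀).congr_of_eventuallyEq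
    (hr_ne.mono fun y hy => (mul_div_cancel_left₀ (cos (θ y)) hy).symm)
  have hs := (hq.div hr.hasDerivAt hr₀).congr_of_eventuallyEq
    (hr_ne.mono fun y hy => (mul_div_cancel_left₀ (sin (θ y)) hy).symm)
  refine (hasDerivAt_angle_of_cos_sin hθ hc hs).congr_deriv ?_
  field_simp
  ring

theorem hasDerivAt_support_of_orthogonal {u v : ℝ → ℝ} {θ' u' v' : ℝ} (hθ : HasDerivAt θ θ' x)
    (hu : HasDerivAt u u' x) (hv : HasDerivAt v v' x)
    (horth : u' * cos (θ x) + v' * sin (θ x) = 0) :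
    HasDerivAt (fun y => u y * cos (θ y) + v y * sin (θ y))
      ((v x * cos (θ x) - u x * sin (θ x)) * θ') x := by
  refine ((hu.mul hθ.cos).add (hv.mul hθ.sin)).congr_deriv ?_
  linear_combination horth

theorem hasDerivAt_angle_of_normal_eq (hθ : ContinuousAt θ x)
    (hcos : ∀ y, cos (θ y) = -5 * y ^ 3 / √(25 * y ^ 6 + 4))
    (hsin : ∀ y, sin (θ y) = 2 / √(25 * y ^ 6 + 4)) :
    HasDerivAt θ (30 * x ^ 2 / (25 * x ^ 6 + 4)) x := by
  have hr : DifferentiableAt ℝ (fun y : ℝ => √(25 * y ^ 6 + 4)) x :=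
    DifferentiableAt.sqrt (by fun_prop) (by positivity)
  have hr_cos (y : ℝ) : √(25 * y ^ 6 + 4) * cos (θ y) = -5 * y ^ 3 := by
    rw [hcos, mul_div_cancel₀ _ (by positivity)]
  have hr_sin (y : ℝ) : √(25 * y ^ 6 + 4) * sin (θ y) = 2 := by
    rw [hsin, mul_div_cancel₀ _ (by positivity)]
  have hp : HasDerivAt (fun y => √(25 * y ^ 6 + 4) * cos (θ y)) (-5 * (3 * x ^ 2)) x := by
    simp only [hr_cos]
    exact (hasDerivAt_pow 3 x).const_mul (-5)
  have hq : HasDerivAt (fun y => √(25 * y ^ 6 + 4) * sin (θ y)) 0 x := by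
    simp only [hr_sin]
    exact hasDerivAt_const x 2
  refine (hasDerivAt_angle_of_polar hθ hr (by positivity) hp hq).congr_deriv ?_
  rw [hr_cos, hr_sin, sq_sqrt (by positivity)]
  ring

theorem hasDerivAt_support_of_normal_eq {θ' : ℝ} (hθ : HasDerivAt θ θ' x)
    (hcos : ∀ y, cos (θ y) = -5 * y ^ 3 / √(25 * y ^ 6 + 4))
    (hsin : ∀ y, sin (θ y) = 2 / √(25 * y ^ 6 + 4)) :
    HasDerivAt (fun y : ℝ => -3 * y ^ 5 / √(25 * y ^ 6 + 4))
      ((-5 * x ^ 8 - 2 * x ^ 2) / √(25 * x ^ 6 + 4) * θ') x := by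
  have horth : (2 * x) * cos (θ x) + (5 * x ^ 4) * sin (θ x) = 0 := by
    rw [hcos, hsin]
    ring
  have hφ₁ : HasDerivAt (fun y : ℝ => y ^ 2) (2 * x) x := by simpa using hasDerivAt_pow 2 x
  have hφ₂ : HasDerivAt (fun y : ℝ => y ^ 5) (5 * x ^ 4) x := by simpa using hasDerivAt_pow 5 x
  convert hasDerivAt_support_of_orthogonal hθ hφ₁ hφ₂ horth using 1
  · ext y
    rw [hcos, hsin]
    ring
  · rw [hcos, hsin]
    ring

end AngleFunction

theorem example_line_family_is_creative_general (θ : ℝ → ℝ) (hθ : Continuous θ)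
    (hθν : ∀ x : ℝ, (cos (θ x), sin (θ x)) =
      ((-5 * x ^ 3 / √(25 * x ^ 6 + 4), 2 / √(25 * x ^ 6 + 4)) : ℝ × ℝ)) :
    (∀ x : ℝ, deriv θ x = 30 * x ^ 2 / (25 * x ^ 6 + 4)) ∧
    (∀ x : ℝ, deriv (fun y : ℝ => -3 * y ^ 5 / √(25 * y ^ 6 + 4)) x =
      (-150 * x ^ 10 - 60 * x ^ 4) / (25 * x ^ 6 + 4) ^ ((3 : ℝ) / 2)) ∧
    (∃ b : ℝ → ℝ, ContDiff ℝ (⊤ : ℕ∞) b ∧ ∀ x : ℝ,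
      deriv (fun y : ℝ => -3 * y ^ 5 / √(25 * y ^ 6 + 4)) x
        = b x * deriv θ x) := by
  have hcos (x : ℝ) : cos (θ x) = -5 * x ^ 3 / √(25 * x ^ 6 + 4) := congrArg Prod.fst (hθν x)
  have hsin (x : ℝ) : sin (θ x) = 2 / √(25 * x ^ 6 + 4) := congrArg Prod.snd (hθν x)
  have hθ' (x : ℝ) : HasDerivAt θ (30 * x ^ 2 / (25 * x ^ 6 + 4)) x :=
    hasDerivAt_angle_of_normal_eq hθ.continuousAt hcos hsin
  have ha' (x : ℝ) : deriv (fun y : ℝ => -3 * y ^ 5 / √(25 * y ^ 6 + 4)) x =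
      (-5 * x ^ 8 - 2 * x ^ 2) / √(25 * x ^ 6 + 4) * (30 * x ^ 2 / (25 * x ^ 6 + 4)) :=
    (hasDerivAt_support_of_normal_eq (hθ' x) hcos hsin).deriv
  refine ⟨fun x => (hθ' x).deriv, fun x => ?_,
    fun x => (-5 * x ^ 8 - 2 * x ^ 2) / √(25 * x ^ 6 + 4),
    ContDiff.div (by fun_prop) (ContDiff.sqrt (by fun_prop) fun x => by positivity)
      fun x => by positivity,
    fun x => by rw [ha', (hθ' x).deriv]⟩
  have hrpow : (25 * x ^ 6 + 4) ^ ((3 : ℝ) / 2) = √(25 * x ^ 6 + 4) * (25 * x ^ 6 + 4) := by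
    rw [rpow_div_two_eq_sqrt _ (by positivity), rpow_ofNat, pow_succ', sq_sqrt (by positivity)]
  rw [ha', hrpow, div_mul_div_comm]
  ring

/-- Example 1: for the frontal `φ(x) = (x², x⁵)` with Gauss mapping
`ν(x) = (−5x³, 2)/√(25x⁶ + 4)` and support function `a(x) = −3x⁵/√(25x⁶ + 4)`, any
smooth angle function `θ` with `(cos θ(x), sin θ(x)) = ν(x)` satisfies
`θ'(x) = 30x²/(25x⁶ + 4)` and `a'(x) = (−150x¹⁰ − 60x⁴)/(25x⁶ + 4)^{3/2}`; in
particular `a'` is divisible by `θ'` by a smooth function `b`, so the line family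
`{H_{(ν(x), a(x))}}` is creative. -/
theorem example_line_family_is_creative (θ : ℝ → ℝ) (hθ : ContDiff ℝ (⊤ : ℕ∞) θ)
    (hθν : ∀ x : ℝ, (Real.cos (θ x), Real.sin (θ x)) =
      ((-5 * x ^ 3 / Real.sqrt (25 * x ^ 6 + 4), 2 / Real.sqrt (25 * x ^ 6 + 4)) : ℝ × ℝ)) :
    (∀ x : ℝ, deriv θ x = 30 * x ^ 2 / (25 * x ^ 6 + 4)) ∧
    (∀ x : ℝ, deriv (fun y : ℝ => -3 * y ^ 5 / Real.sqrt (25 * y ^ 6 + 4)) x =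
      (-150 * x ^ 10 - 60 * x ^ 4) / (25 * x ^ 6 + 4) ^ ((3 : ℝ) / 2)) ∧
    (∃ b : ℝ → ℝ, ContDiff ℝ (⊤ : ℕ∞) b ∧ ∀ x : ℝ,
      deriv (fun y : ℝ => -3 * y ^ 5 / Real.sqrt (25 * y ^ 6 + 4)) x
        = b x * deriv θ x) :=
  example_line_family_is_creative_general θ hθ.continuous hθν
end
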